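/- arXiv:1811.12588 — 2 statements merged into one kernel-verified Lean document; each statement's English description precedes it below -/
import Mathlib

section
/- Let R be a rigid subcategory of C and X a two-term maximal R[1]-rigid subcategory of C. For any object R₀ ∈ R, if there exists a triangle M[-1] →f R₀ →g X →h M in C such that g : R₀ → X is a left X-approximation of R₀, then M ∈ X. -/
/-!
Setting: `C` is a Hom-finite Krull–Schmidt `k`-linear triangulated category over an
algebraically closed field `k` (Krull–Schmidt is encoded as Hom-finiteness together with
idempotent completeness). Subcategories are identified with their classes of objects and
are always assumed full, closed under isomorphisms, direct sums and direct summands.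
-/

open CategoryTheory CategoryTheory.Limits CategoryTheory.Pretriangulated Opposite

universe v u

variable {C : Type u} [Category.{v} C] [Preadditive C] [HasZeroObject C] [HasShift C ℤ]
  [∀ n : ℤ, (shiftFunctor C n).Additive] [Pretriangulated C]

/-- `Y` is a direct summand (retract) of `X`. -/
def IsRetractOf {D : Type*} [Category D] (Y X : D) : Prop :=
  ∃ (s : Y ⟶ X) (r : X ⟶ Y), s ≫ r = 𝟙 Y

/-- `S` is a direct sum (biproduct) of `F` and `G`. -/
def IsDirectSumOf {D : Type*} [Category D] [Preadditive D] (S F G : D) : Prop :=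
  ∃ (i : F ⟶ S) (j : G ⟶ S) (p : S ⟶ F) (q : S ⟶ G),
    i ≫ p = 𝟙 F ∧ j ≫ q = 𝟙 G ∧ i ≫ q = 0 ∧ j ≫ p = 0 ∧ p ≫ i + q ≫ j = 𝟙 S

/-- A subcategory of an additive category, identified with its class of objects:
closed under isomorphisms, finite direct sums and direct summands. -/
def IsSubcat {D : Type*} [Category D] [Preadditive D] (S : Set D) : Prop :=
  (∀ ⦃X Y : D⦄, (X ≅ Y) → X ∈ S → Y ∈ S) ∧
  (∀ ⦃F G T : D⦄, F ∈ S → G ∈ S → IsDirectSumOf T F G → T ∈ S) ∧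
  (∀ ⦃X Y : D⦄, X ∈ S → IsRetractOf Y X → Y ∈ S)

/-- `f : X ⟶ A` is a right `𝓧`-approximation of `A`:
every map `X' ⟶ A` with `X' ∈ 𝓧` factors through `f`. -/
def IsRightApprox {D : Type*} [Category D] (𝓧 : Set D) {X A : D} (f : X ⟶ A) : Prop :=
  ∀ X' ∈ 𝓧, ∀ g : X' ⟶ A, ∃ h : X' ⟶ X, h ≫ f = g

/-- `f : A ⟶ X` is a left `𝓧`-approximation of `A`:
every map `A ⟶ X'` with `X' ∈ 𝓧` factors through `f`. -/
def IsLeftApprox {D : Type*} [Category D] (𝓧 : Set D) {A X : D} (f : A ⟶ X) : Prop :=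
  ∀ X' ∈ 𝓧, ∀ g : A ⟶ X', ∃ h : X ⟶ X', f ≫ h = g

/-- `𝓧` is contravariantly finite: every object admits a right `𝓧`-approximation. -/
def ContravariantlyFinite {D : Type*} [Category D] (𝓧 : Set D) : Prop :=
  ∀ A : D, ∃ X ∈ 𝓧, ∃ f : X ⟶ A, IsRightApprox 𝓧 f

/-- `𝓧` is covariantly finite: every object admits a left `𝓧`-approximation. -/
def CovariantlyFinite {D : Type*} [Category D] (𝓧 : Set D) : Prop :=
  ∀ A : D, ∃ X ∈ 𝓧, ∃ f : A ⟶ X, IsLeftApprox 𝓧 f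

/-- `𝓧` is functorially finite. -/
def FunctoriallyFinite {D : Type*} [Category D] (𝓧 : Set D) : Prop :=
  ContravariantlyFinite 𝓧 ∧ CovariantlyFinite 𝓧

/-- `𝓧 ∨ add M`: the smallest subcategory containing `𝓧` and `M`. -/
def veeAdd {D : Type*} [Category D] [Preadditive D] (𝓧 : Set D) (M : D) : Set D :=
  ⋂₀ {T : Set D | IsSubcat T ∧ 𝓧 ⊆ T ∧ M ∈ T}

/-- The shift `𝓢⟦n⟧` of a subcategory (closed under isomorphism). -/
def shiftSet (𝓢 : Set C) (n : ℤ) : Set C := {Y | ∃ X ∈ 𝓢, Nonempty (Y ≅ X⟦n⟧)}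

/-- `𝓐 ∗ 𝓑`: the class of objects `M` admitting a distinguished triangle
`A → M → B → A⟦1⟧` with `A ∈ 𝓐` and `B ∈ 𝓑`. -/
def starSet (𝓐 𝓑 : Set C) : Set C :=
  {M | ∃ A ∈ 𝓐, ∃ B ∈ 𝓑, ∃ (f : A ⟶ M) (g : M ⟶ B) (h : B ⟶ A⟦(1:ℤ)⟧),
    Triangle.mk f g h ∈ distTriang C}

/-- `𝓡 ∗ 𝓡[1]`, the class of two-term objects with respect to `𝓡`. -/
def twoTerm (𝓡 : Set C) : Set C := starSet 𝓡 (shiftSet 𝓡 1)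

/-- `𝓡` is rigid: `Hom(R, R'[1]) = 0` for all `R, R' ∈ 𝓡`. -/
def IsRigidSubcat (𝓡 : Set C) : Prop :=
  ∀ R ∈ 𝓡, ∀ R' ∈ 𝓡, ∀ φ : R ⟶ R'⟦(1:ℤ)⟧, φ = 0

/-- `φ` lies in the ideal `[𝓡[1]]` of morphisms factoring through an object of `𝓡⟦1⟧`. -/
def InShiftIdeal (𝓡 : Set C) {A B : C} (φ : A ⟶ B) : Prop :=
  ∃ R ∈ 𝓡, ∃ (a : A ⟶ R⟦(1:ℤ)⟧) (b : R⟦(1:ℤ)⟧ ⟶ B), φ = a ≫ b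

/-- `𝓧` is `𝓡[1]`-rigid: `[𝓡[1]](𝓧, 𝓧[1]) = 0`. -/
def IsRelRigid (𝓡 𝓧 : Set C) : Prop :=
  ∀ X ∈ 𝓧, ∀ X' ∈ 𝓧, ∀ φ : X ⟶ X'⟦(1:ℤ)⟧, InShiftIdeal 𝓡 φ → φ = 0

/-- `[𝓡[1]](M, 𝓧[1]) = 0`. -/
def relOrthTo (𝓡 𝓧 : Set C) (M : C) : Prop :=
  ∀ X ∈ 𝓧, ∀ φ : M ⟶ X⟦(1:ℤ)⟧, InShiftIdeal 𝓡 φ → φ = 0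

/-- `[𝓡[1]](𝓧, M[1]) = 0`. -/
def relOrthFrom (𝓡 𝓧 : Set C) (M : C) : Prop :=
  ∀ X ∈ 𝓧, ∀ φ : X ⟶ M⟦(1:ℤ)⟧, InShiftIdeal 𝓡 φ → φ = 0

/-- `𝓧 ⊆ 𝓡 ∗ 𝓡[1]` is two-term maximal `𝓡[1]`-rigid: it is `𝓡[1]`-rigid and for every
`M ∈ 𝓡 ∗ 𝓡[1]`, `[𝓡[1]](𝓧 ∨ add M, (𝓧 ∨ add M)[1]) = 0` implies `M ∈ 𝓧`. -/
def IsTwoTermMaxRelRigid (𝓡 𝓧 : Set C) : Prop :=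
  𝓧 ⊆ twoTerm 𝓡 ∧ IsRelRigid 𝓡 𝓧 ∧
  ∀ M ∈ twoTerm 𝓡, IsRelRigid 𝓡 (veeAdd 𝓧 M) → M ∈ 𝓧

/-- `𝓧 ⊆ 𝓡 ∗ 𝓡[1]` is two-term weak `𝓡[1]`-cluster tilting: `𝓡 ⊆ 𝓧[-1] ∗ 𝓧` and
`𝓧 = {M ∈ 𝓡 ∗ 𝓡[1] : [𝓡[1]](M, 𝓧[1]) = 0 and [𝓡[1]](𝓧, M[1]) = 0}`. -/
def IsTwoTermWeakRelCT (𝓡 𝓧 : Set C) : Prop :=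
  𝓧 ⊆ twoTerm 𝓡 ∧
  (∀ R ∈ 𝓡, R ∈ starSet (shiftSet 𝓧 (-1)) 𝓧) ∧
  (∀ M : C, M ∈ 𝓧 ↔ M ∈ twoTerm 𝓡 ∧ relOrthTo 𝓡 𝓧 M ∧ relOrthFrom 𝓡 𝓧 M)

/-- `𝓧 ⊆ 𝓡 ∗ 𝓡[1]` is two-term `𝓡[1]`-cluster tilting: `𝓧` is contravariantly finite and
`𝓧 = {M ∈ 𝓡 ∗ 𝓡[1] : [𝓡[1]](M, 𝓧[1]) = 0 and [𝓡[1]](𝓧, M[1]) = 0}`. -/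
def IsTwoTermRelCT (𝓡 𝓧 : Set C) : Prop :=
  𝓧 ⊆ twoTerm 𝓡 ∧ ContravariantlyFinite 𝓧 ∧
  (∀ M : C, M ∈ 𝓧 ↔ M ∈ twoTerm 𝓡 ∧ relOrthTo 𝓡 𝓧 M ∧ relOrthFrom 𝓡 𝓧 M)

/-- For a finite-dimensional endomorphism space, `𝟙 + μ • f` is an isomorphism for almost all `μ`. -/
lemma finite_not_isIso_one_add_smul {D : Type*} [Category D] [Preadditive D]
    (k : Type*) [Field k] [IsAlgClosed k] [Linear k D] {A : D} [FiniteDimensional k (A ⟶ A)]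
    (f : A ⟶ A) : {μ : k | ¬ IsIso (𝟙 A + μ • f)}.Finite := by
  have : FiniteDimensional k (End A) := inferInstanceAs (FiniteDimensional k (A ⟶ A))
  classical
  let F : End A := f
  have hint : IsIntegral k F := Algebra.IsIntegral.isIntegral F
  have hfin : (spectrum k F).Finite := by
    refine ((minpoly k F).roots.toFinset.finite_toSet).subset ?_
    intro μ hμ
    have h1 := spectrum.subset_polynomial_aeval F (minpoly k F) ⟨μ, hμ, rfl⟩
    rw [minpoly.aeval] at h1
    have h2 : (minpoly k F).eval μ = 0 := by
      by_contra hne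
      apply h1
      rw [spectrum.mem_resolventSet_iff, sub_zero]
      exact (IsUnit.mk0 _ hne).map (algebraMap k (End A))
    simp only [Finset.mem_coe, Multiset.mem_toFinset]
    exact (Polynomial.mem_roots (minpoly.ne_zero hint)).2 h2
  refine (hfin.image (fun x => - x⁻¹)).subset ?_
  intro μ hμ
  have hμ0 : μ ≠ 0 := by
    rintro rfl
    apply hμ
    rw [zero_smul, add_zero]
    infer_instance
  refine ⟨- μ⁻¹, ?_, by simp⟩
  intro hu
  apply hμ
  have h3 : IsUnit ((algebraMap k (End A) (-μ)) * (algebraMap k (End A) (-μ⁻¹) - F)) :=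
    ((IsUnit.mk0 _ (neg_ne_zero.2 hμ0)).map (algebraMap k (End A))).mul hu
  have h4 : (algebraMap k (End A) (-μ)) * (algebraMap k (End A) (-μ⁻¹) - F) = 1 + μ • F := by
    rw [mul_sub, ← map_mul, ← Algebra.smul_def]
    simp [hμ0]
  rw [h4] at h3
  exact (isUnit_iff_isIso _).1 h3

section TriangleHelpers

variable {A B D : C} {f : A ⟶ B} {g : B ⟶ D} {h : D ⟶ A⟦(1:ℤ)⟧}

lemma tri_rot (hT : Triangle.mk f g h ∈ distTriang C) :
    Triangle.mk g h (-f⟦(1:ℤ)⟧') ∈ distTriang C :=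
  rot_of_distTriang _ hT

lemma tri_unrot (hT : Triangle.mk g h (-f⟦(1:ℤ)⟧') ∈ distTriang C) :
    Triangle.mk f g h ∈ distTriang C :=
  (Pretriangulated.rotate_distinguished_triangle _).2 hT

lemma tri_iso₂ (hT : Triangle.mk f g h ∈ distTriang C) {B' : C} (θ : B ≅ B') :
    Triangle.mk (f ≫ θ.hom) (θ.inv ≫ g) h ∈ distTriang C := by
  refine isomorphic_distinguished _ hT _ ?_
  refine Triangle.isoMk _ _ (Iso.refl A) θ.symm (Iso.refl D) ?_ ?_ ?_
  · change (f ≫ θ.hom) ≫ θ.inv = 𝟙 A ≫ f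
    simp
  · change (θ.inv ≫ g) ≫ 𝟙 D = θ.inv ≫ g
    simp
  · change h ≫ (𝟙 A)⟦(1:ℤ)⟧' = 𝟙 D ≫ h
    simp

lemma tri_iso₃ (hT : Triangle.mk f g h ∈ distTriang C) {D' : C} (θ : D ≅ D') :
    Triangle.mk f (g ≫ θ.hom) (θ.inv ≫ h) ∈ distTriang C := by
  refine isomorphic_distinguished _ hT _ ?_
  refine Triangle.isoMk _ _ (Iso.refl A) (Iso.refl B) θ.symm ?_ ?_ ?_
  · change f ≫ 𝟙 B = 𝟙 A ≫ f
    simp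
  · change (g ≫ θ.hom) ≫ θ.inv = 𝟙 B ≫ g
    simp
  · change (θ.inv ≫ h) ≫ (𝟙 A)⟦(1:ℤ)⟧' = θ.inv ≫ h
    simp

lemma tri_yoneda₂ (hT : Triangle.mk f g h ∈ distTriang C) {Z : C} (x : B ⟶ Z)
    (hx : f ≫ x = 0) : ∃ y : D ⟶ Z, x = g ≫ y :=
  Triangle.yoneda_exact₂ _ hT x hx

lemma tri_yoneda₃ (hT : Triangle.mk f g h ∈ distTriang C) {Z : C} (x : D ⟶ Z)
    (hx : g ≫ x = 0) : ∃ y : A⟦(1:ℤ)⟧ ⟶ Z, x = h ≫ y :=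
  Triangle.yoneda_exact₃ _ hT x hx

lemma tri_yoneda₄ (hT : Triangle.mk f g h ∈ distTriang C) {Z : C} (x : A⟦(1:ℤ)⟧ ⟶ Z)
    (hx : h ≫ x = 0) : ∃ y : B⟦(1:ℤ)⟧ ⟶ Z, x = f⟦(1:ℤ)⟧' ≫ y := by
  obtain ⟨y, hy⟩ := tri_yoneda₃ (tri_rot hT) x hx
  exact ⟨-y, by rw [hy]; simp⟩

lemma tri_coyoneda₂ (hT : Triangle.mk f g h ∈ distTriang C) {Z : C} (x : Z ⟶ B)
    (hx : x ≫ g = 0) : ∃ y : Z ⟶ A, x = y ≫ f :=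
  Triangle.coyoneda_exact₂ _ hT x hx

lemma tri_coyoneda₃ (hT : Triangle.mk f g h ∈ distTriang C) {Z : C} (x : Z ⟶ D)
    (hx : x ≫ h = 0) : ∃ y : Z ⟶ B, x = y ≫ g :=
  Triangle.coyoneda_exact₃ _ hT x hx

lemma tri_coyoneda₄ (hT : Triangle.mk f g h ∈ distTriang C) {Z : C} (x : Z ⟶ A⟦(1:ℤ)⟧)
    (hx : x ≫ f⟦(1:ℤ)⟧' = 0) : ∃ y : Z ⟶ D, x = y ≫ h :=
  Triangle.coyoneda_exact₁ _ hT x hx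

lemma tri_coyoneda₅ (hT : Triangle.mk f g h ∈ distTriang C) {Z : C} (x : Z ⟶ B⟦(1:ℤ)⟧)
    (hx : x ≫ g⟦(1:ℤ)⟧' = 0) : ∃ y : Z ⟶ A⟦(1:ℤ)⟧, x = y ≫ f⟦(1:ℤ)⟧' := by
  obtain ⟨y, hy⟩ := tri_coyoneda₄ (tri_rot hT) x hx
  exact ⟨-y, by rw [hy]; simp⟩

lemma tri_map (hT : Triangle.mk f g h ∈ distTriang C)
    {A' B' D' : C} {f' : A' ⟶ B'} {g' : B' ⟶ D'} {h' : D' ⟶ A'⟦(1:ℤ)⟧}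
    (hT' : Triangle.mk f' g' h' ∈ distTriang C) (α : A ⟶ A') (β : B ⟶ B')
    (comm : f ≫ β = α ≫ f') :
    ∃ γ : D ⟶ D', g ≫ γ = β ≫ g' ∧ h ≫ α⟦(1:ℤ)⟧' = γ ≫ h' :=
  complete_distinguished_triangle_morphism _ _ hT hT' α β comm

end TriangleHelpers

/-- A weak octahedral statement available without the octahedral axiom. -/
lemma exists_cone_triangle
    (k : Type*) [Field k] [IsAlgClosed k] [Linear k C]
    [∀ X Y : C, FiniteDimensional k (X ⟶ Y)]
    {R₀ R₁ R₂ X M : C} (a : R₂ ⟶ R₁) (i : R₁ ⟶ X) (c : X ⟶ R₂⟦(1:ℤ)⟧)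
    (hT : Triangle.mk a i c ∈ distTriang C)
    (g : R₀ ⟶ X) (p : X ⟶ M) (q : M ⟶ R₀⟦(1:ℤ)⟧) (hG : Triangle.mk g p q ∈ distTriang C)
    (u : R₀ ⟶ R₁) (hu : u ≫ i = g) :
    ∃ (M' : C) (_ : M' ≅ M) (j : R₁ ⟶ M') (d : M' ⟶ (R₂ ⊞ R₀)⟦(1:ℤ)⟧),
      Triangle.mk (biprod.desc a u) j d ∈ distTriang C := by
  obtain ⟨M', j, d, hM'⟩ := distinguished_cocone_triangle (biprod.desc a u)
  have hai : a ≫ i = 0 := comp_distTriang_mor_zero₁₂ _ hT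
  have hic : i ≫ c = 0 := comp_distTriang_mor_zero₂₃ _ hT
  have hgp : g ≫ p = 0 := comp_distTriang_mor_zero₁₂ _ hG
  have hpq : p ≫ q = 0 := comp_distTriang_mor_zero₂₃ _ hG
  have hqg : q ≫ g⟦(1:ℤ)⟧' = 0 := comp_distTriang_mor_zero₃₁ _ hG
  have hsj : biprod.desc a u ≫ j = 0 := comp_distTriang_mor_zero₁₂ _ hM'
  have hjd : j ≫ d = 0 := comp_distTriang_mor_zero₂₃ _ hM'
  have hds : d ≫ (biprod.desc a u)⟦(1:ℤ)⟧' = 0 := comp_distTriang_mor_zero₃₁ _ hM'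
  have huj : u ≫ j = 0 := by
    have := congrArg (fun x => biprod.inr ≫ x) hsj
    simpa using this
  obtain ⟨ψ, hψ₁, hψ₂⟩ := tri_map hM' hG (biprod.snd : R₂ ⊞ R₀ ⟶ R₀) i (by
    apply biprod.hom_ext' <;> simp [hai, hu])
  obtain ⟨w, hw₁, hw₂⟩ := tri_map hT hM' (biprod.inl : R₂ ⟶ R₂ ⊞ R₀) (𝟙 R₁) (by simp)
  rw [Category.id_comp] at hw₁
  -- notation for the shifted structure maps of the biproduct
  obtain ⟨F, hF⟩ : ∃ F, F = (biprod.fst : R₂ ⊞ R₀ ⟶ R₂)⟦(1:ℤ)⟧' := ⟨_, rfl⟩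
  obtain ⟨S, hS⟩ : ∃ S, S = (biprod.snd : R₂ ⊞ R₀ ⟶ R₀)⟦(1:ℤ)⟧' := ⟨_, rfl⟩
  obtain ⟨I, hI⟩ : ∃ I, I = (biprod.inl : R₂ ⟶ R₂ ⊞ R₀)⟦(1:ℤ)⟧' := ⟨_, rfl⟩
  obtain ⟨J, hJ⟩ : ∃ J, J = (biprod.inr : R₀ ⟶ R₂ ⊞ R₀)⟦(1:ℤ)⟧' := ⟨_, rfl⟩
  rw [← hS] at hψ₂
  rw [← hI] at hw₂
  have hIF : I ≫ F = 𝟙 _ := by rw [hI, hF, ← Functor.map_comp]; simp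
  have hIS : I ≫ S = 0 := by rw [hI, hS, ← Functor.map_comp]; simp
  have hJF : J ≫ F = 0 := by rw [hJ, hF, ← Functor.map_comp]; simp
  have hJS : J ≫ S = 𝟙 _ := by rw [hJ, hS, ← Functor.map_comp]; simp
  have htot : F ≫ I + S ≫ J = 𝟙 _ := by
    rw [hF, hI, hS, hJ, ← Functor.map_comp, ← Functor.map_comp, ← Functor.map_add]; simp
  have hIσ : I ≫ (biprod.desc a u)⟦(1:ℤ)⟧' = a⟦(1:ℤ)⟧' := by
    rw [hI, ← Functor.map_comp]; simp
  have hJσ : J ≫ (biprod.desc a u)⟦(1:ℤ)⟧' = u⟦(1:ℤ)⟧' := by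
    rw [hJ, ← Functor.map_comp]; simp
  have hds' : d ≫ F ≫ a⟦(1:ℤ)⟧' = - (d ≫ S ≫ u⟦(1:ℤ)⟧') := by
    have h1 : d ≫ (F ≫ I + S ≫ J) ≫ (biprod.desc a u)⟦(1:ℤ)⟧' = 0 := by
      rw [htot, Category.id_comp, hds]
    simp only [Preadditive.add_comp, Preadditive.comp_add, Category.assoc, hIσ, hJσ] at h1
    exact eq_neg_of_add_eq_zero_left h1
  -- the discrepancy
  obtain ⟨t, ht⟩ := tri_yoneda₃ hT (w ≫ ψ - p) (by
    rw [Preadditive.comp_sub, reassoc_of% hw₁, hψ₁, sub_self])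
  have hctq : c ≫ t ≫ q = 0 := by
    rw [← Category.assoc, ← ht, Preadditive.sub_comp, hpq, Category.assoc, ← hψ₂,
      ← reassoc_of% hw₂, hIS, comp_zero, sub_zero]
  obtain ⟨e, he⟩ := tri_coyoneda₃ hG (c ≫ t) (by rw [Category.assoc, hctq])
  obtain ⟨y, hy⟩ := tri_coyoneda₂ hG (i ≫ e) (by
    rw [Category.assoc, ← he, reassoc_of% hic, zero_comp])
  obtain ⟨V, hV⟩ := tri_yoneda₄ hT (t ≫ q) hctq
  obtain ⟨v, rfl⟩ := (shiftFunctor C (1:ℤ)).map_surjective V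
  have havg : a ≫ v ≫ g = 0 := by
    apply (shiftFunctor C (1:ℤ)).map_injective
    rw [Functor.map_comp, Functor.map_comp, ← Category.assoc, ← hV, Category.assoc, hqg,
      comp_zero, Functor.map_zero]
  obtain ⟨s, hs⟩ := tri_yoneda₂ hT (v ≫ g) havg
  obtain ⟨U, hU⟩ : ∃ U, U = (u ≫ v)⟦(1:ℤ)⟧' := ⟨_, rfl⟩
  obtain ⟨G, hG'⟩ : ∃ G, G = g⟦(1:ℤ)⟧' := ⟨_, rfl⟩
  obtain ⟨s', hs'⟩ : ∃ s', s' = s⟦(1:ℤ)⟧' := ⟨_, rfl⟩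
  have hUG : U ≫ G = G ≫ s' := by
    rw [hU, hG', hs', ← Functor.map_comp, ← Functor.map_comp, ← hu, Category.assoc,
      Category.assoc, hu, hs]
  have hge : g ≫ e = u ≫ y ≫ g := by rw [← hu, Category.assoc, hy, hu]
  have hgw : g ≫ w = 0 := by rw [← hu, Category.assoc, hw₁, huj]
  rw [← hG'] at hqg
  -- a generic scalar
  obtain ⟨l, hl⟩ : ∃ l : k, l ∉ ({μ : k | ¬ IsIso (𝟙 _ + μ • U)} ∪ {μ : k | ¬ IsIso (𝟙 _ + μ • s')})
      ∪ ((fun x => 1 - x) '' ({μ : k | ¬ IsIso (𝟙 _ + μ • e)} ∪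
        {μ : k | ¬ IsIso (𝟙 _ + μ • (u ≫ y))})) := by
    haveI : Infinite k := IsAlgClosed.instInfinite
    refine Set.Finite.exists_notMem ?_
    exact ((finite_not_isIso_one_add_smul k U).union (finite_not_isIso_one_add_smul k s')).union
      (((finite_not_isIso_one_add_smul k e).union
        (finite_not_isIso_one_add_smul k (u ≫ y))).image _)
  simp only [Set.mem_union, Set.mem_image, not_or, not_exists, not_and, Set.mem_setOf_eq,
    not_not] at hl
  obtain ⟨⟨hl₁, hl₂⟩, hl₃⟩ := hl
  obtain ⟨m, hm⟩ : ∃ m : k, m = 1 - l := ⟨_, rfl⟩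
  have hl₄ : IsIso (𝟙 _ + m • e) := by
    by_contra hcon
    exact hl₃ m (Or.inl hcon) (by rw [hm]; ring)
  have hl₅ : IsIso (𝟙 _ + m • (u ≫ y)) := by
    by_contra hcon
    exact hl₃ m (Or.inr hcon) (by rw [hm]; ring)
  clear hl₃
  obtain ⟨α, hα⟩ : ∃ α, α = 𝟙 _ + l • U := ⟨_, rfl⟩
  obtain ⟨τ, hτ⟩ : ∃ τ, τ = 𝟙 _ + l • s' := ⟨_, rfl⟩
  obtain ⟨β, hβ⟩ : ∃ β, β = 𝟙 _ + m • e := ⟨_, rfl⟩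
  obtain ⟨γ, hγ⟩ : ∃ γ, γ = 𝟙 _ + m • (u ≫ y) := ⟨_, rfl⟩
  rw [← hα] at hl₁
  rw [← hτ] at hl₂
  rw [← hβ] at hl₄
  rw [← hγ] at hl₅
  have hαG : α ≫ G = G ≫ τ := by
    rw [hα, hτ]
    simp [hUG]
  have hgβ : g ≫ β = γ ≫ g := by
    rw [hβ, hγ]
    simp [hge]
  have hαG' : inv α ≫ G = G ≫ inv τ := by
    rw [IsIso.inv_comp_eq, ← Category.assoc, hαG, Category.assoc, IsIso.hom_inv_id,
      Category.comp_id]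
  have hgβ' : g ≫ inv β = inv γ ≫ g := by
    rw [IsIso.eq_inv_comp, ← Category.assoc, ← hgβ, Category.assoc, IsIso.hom_inv_id,
      Category.comp_id]
  obtain ⟨χ, hχ⟩ : ∃ χ, χ = ψ - l • (d ≫ F ≫ t) := ⟨_, rfl⟩
  have hχq : χ ≫ q = d ≫ S ≫ α := by
    rw [hχ, hα, Preadditive.sub_comp, ← hψ₂, Linear.smul_comp, Category.assoc, Category.assoc, hV,
      reassoc_of% hds', hU]
    simp
  have hwχ : w ≫ χ = β ≫ p := by
    have h1 : w ≫ ψ = p + c ≫ t := by rw [← ht]; abel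
    rw [hχ, hβ, Preadditive.comp_sub, Linear.comp_smul, ← reassoc_of% hw₂, reassoc_of% hIF, h1,
      Preadditive.add_comp, Linear.smul_comp, Category.id_comp, he, hm, sub_smul, one_smul]
    abel
  -- `χ` is a split epimorphism
  obtain ⟨n₂, hn₂⟩ := tri_coyoneda₅ hT (q ≫ inv α ≫ u⟦(1:ℤ)⟧') (by
    rw [Category.assoc, Category.assoc, ← Functor.map_comp, hu, ← hG', hαG', reassoc_of% hqg,
      zero_comp])
  obtain ⟨m', hm'⟩ := tri_coyoneda₄ hM' (q ≫ inv α ≫ J - n₂ ≫ I) (by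
    rw [Preadditive.sub_comp, Category.assoc, Category.assoc, Category.assoc, hIσ, hJσ, hn₂,
      sub_self])
  obtain ⟨r, hr⟩ := tri_coyoneda₃ hG (m' ≫ χ - 𝟙 _) (by
    rw [Preadditive.sub_comp, Category.assoc, hχq, ← reassoc_of% hm']
    simp [reassoc_of% hJS, reassoc_of% hIS])
  have hsplit : (m' - r ≫ inv β ≫ w) ≫ χ = 𝟙 _ := by
    rw [Preadditive.sub_comp, Category.assoc, Category.assoc, hwχ, IsIso.inv_hom_id_assoc, ← hr]
    abel
  -- `χ` is a monomorphism
  have hmono : ∀ {Z : C} (x : Z ⟶ M'), x ≫ χ = 0 → x = 0 := by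
    intro Z x hx
    have h1 : x ≫ d ≫ S = 0 := by
      rw [← cancel_mono α, Category.assoc, Category.assoc, ← hχq, reassoc_of% hx, zero_comp,
        zero_comp]
    obtain ⟨n, hn⟩ := tri_coyoneda₄ hT (x ≫ d ≫ F) (by
      rw [Category.assoc, Category.assoc, hds', Preadditive.comp_neg]
      have := congrArg (fun z => z ≫ u⟦(1:ℤ)⟧') h1
      simpa using this)
    obtain ⟨r', hr'⟩ := tri_coyoneda₃ hM' (x - n ≫ w) (by
      rw [Preadditive.sub_comp, Category.assoc, ← hw₂, ← reassoc_of% hn]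
      have h2 : x ≫ d = x ≫ d ≫ (F ≫ I + S ≫ J) := by rw [htot, Category.comp_id]
      have h3 : x ≫ d ≫ S ≫ J = 0 := by
        have := congrArg (fun z => z ≫ J) h1
        simpa using this
      rw [h2, Preadditive.comp_add, Preadditive.comp_add, h3, add_zero, sub_self])
    have h4 : x = (n + r' ≫ i) ≫ w := by
      rw [Preadditive.add_comp, Category.assoc, hw₁, ← hr']
      abel
    obtain ⟨z, hz⟩ := tri_coyoneda₂ hG ((n + r' ≫ i) ≫ β) (by
      rw [Category.assoc, ← hwχ, ← Category.assoc, ← h4, hx])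
    have h5 : n + r' ≫ i = z ≫ inv γ ≫ g := by
      rw [← hgβ', ← Category.assoc, ← hz, Category.assoc, IsIso.hom_inv_id, Category.comp_id]
    rw [h4, h5, Category.assoc, Category.assoc, hgw, comp_zero, comp_zero]
  refine ⟨M', ⟨χ, m' - r ≫ inv β ≫ w, ?_, hsplit⟩, j, d, hM'⟩
  rw [← sub_eq_zero]
  apply hmono
  rw [Preadditive.sub_comp, Category.assoc, hsplit, Category.comp_id, Category.id_comp, sub_self]

lemma InShiftIdeal.precomp {𝓡 : Set C} {A B D : C} {φ : A ⟶ B} (h : InShiftIdeal 𝓡 φ)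
    (x : D ⟶ A) : InShiftIdeal 𝓡 (x ≫ φ) := by
  obtain ⟨R, hR, a, b, rfl⟩ := h
  exact ⟨R, hR, x ≫ a, b, by simp⟩

lemma InShiftIdeal.postcomp {𝓡 : Set C} {A B D : C} {φ : A ⟶ B} (h : InShiftIdeal 𝓡 φ)
    (x : B ⟶ D) : InShiftIdeal 𝓡 (φ ≫ x) := by
  obtain ⟨R, hR, a, b, rfl⟩ := h
  exact ⟨R, hR, a, b ≫ x, by simp⟩

lemma isSubcat_left (𝓡 𝓨 : Set C) :
    IsSubcat {A : C | ∀ B ∈ 𝓨, ∀ φ : A ⟶ B⟦(1:ℤ)⟧, InShiftIdeal 𝓡 φ → φ = 0} := by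
  refine ⟨?_, ?_, ?_⟩
  · intro A A' e hA B hB φ hφ
    have := hA B hB _ (hφ.precomp e.hom)
    rwa [← cancel_epi e.hom, comp_zero]
  · rintro F G T hF hG ⟨i, j, p, q, -, -, -, -, htot⟩ B hB φ hφ
    rw [← Category.id_comp φ, ← htot, Preadditive.add_comp, Category.assoc, Category.assoc,
      hF B hB _ (hφ.precomp i), hG B hB _ (hφ.precomp j), comp_zero, comp_zero, add_zero]
  · rintro A A' hA ⟨s, r, hsr⟩ B hB φ hφ
    rw [← Category.id_comp φ, ← hsr, Category.assoc, hA B hB _ (hφ.precomp r), comp_zero]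

lemma isSubcat_right (𝓡 𝓨 : Set C) :
    IsSubcat {B : C | ∀ A ∈ 𝓨, ∀ φ : A ⟶ B⟦(1:ℤ)⟧, InShiftIdeal 𝓡 φ → φ = 0} := by
  refine ⟨?_, ?_, ?_⟩
  · intro B B' e hB A hA φ hφ
    have := hB A hA _ (hφ.postcomp (e.inv⟦(1:ℤ)⟧'))
    rwa [← cancel_mono (e.inv⟦(1:ℤ)⟧'), zero_comp]
  · rintro F G T hF hG ⟨i, j, p, q, -, -, -, -, htot⟩ A hA φ hφ
    rw [← Category.comp_id φ, ← CategoryTheory.Functor.map_id, ← htot, Functor.map_add, Functor.map_comp,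
      Functor.map_comp, Preadditive.comp_add, ← Category.assoc, ← Category.assoc,
      hF A hA _ (hφ.postcomp _), hG A hA _ (hφ.postcomp _), zero_comp, zero_comp, add_zero]
  · rintro B B' hB ⟨s, r, hsr⟩ A hA φ hφ
    rw [← Category.comp_id φ, ← CategoryTheory.Functor.map_id, ← hsr, Functor.map_comp, ← Category.assoc,
      hB A hA _ (hφ.postcomp _), zero_comp]

lemma isRelRigid_veeAdd (𝓡 𝓧 : Set C) (M : C) (h₁ : IsRelRigid 𝓡 𝓧) (h₂ : relOrthTo 𝓡 𝓧 M)
    (h₃ : relOrthFrom 𝓡 𝓧 M) (h₄ : ∀ φ : M ⟶ M⟦(1:ℤ)⟧, InShiftIdeal 𝓡 φ → φ = 0) :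
    IsRelRigid 𝓡 (veeAdd 𝓧 M) := by
  have hA : ∀ A ∈ veeAdd 𝓧 M, ∀ B ∈ 𝓧 ∪ {M}, ∀ φ : A ⟶ B⟦(1:ℤ)⟧, InShiftIdeal 𝓡 φ → φ = 0 := by
    intro A hA
    refine hA _ ⟨isSubcat_left 𝓡 (𝓧 ∪ {M}), ?_, ?_⟩
    · rintro Y hY B (hB | rfl)
      · exact h₁ Y hY B hB
      · exact h₃ Y hY
    · rintro B (hB | rfl)
      · exact h₂ B hB
      · exact h₄
  intro A hA' B hB
  have := hB {B : C | ∀ A ∈ veeAdd 𝓧 M, ∀ φ : A ⟶ B⟦(1:ℤ)⟧, InShiftIdeal 𝓡 φ → φ = 0}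
    ⟨isSubcat_right 𝓡 _, fun Y hY A hA' => hA A hA' Y (Or.inl hY), fun A hA' => hA A hA' M (Or.inr rfl)⟩
  exact this A hA'

/-- **Lemma (Statement 1).** Let `𝓧` be a two-term maximal `𝓡[1]`-rigid subcategory.
For `R₀ ∈ 𝓡`, if there is a triangle `M⟦-1⟧ → R₀ → X → M` with `X ∈ 𝓧` such that
`g : R₀ ⟶ X` is a left `𝓧`-approximation of `R₀`, then `M ∈ 𝓧`. -/
theorem mem_of_triangle_leftApprox
    (k : Type*) [Field k] [IsAlgClosed k] [Linear k C]
    [∀ X Y : C, FiniteDimensional k (X ⟶ Y)] [IsIdempotentComplete C]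
    (𝓡 𝓧 : Set C) (h𝓡sub : IsSubcat 𝓡) (h𝓡 : IsRigidSubcat 𝓡)
    (h𝓧sub : IsSubcat 𝓧) (h𝓧max : IsTwoTermMaxRelRigid 𝓡 𝓧)
    (R₀ : C) (hR₀ : R₀ ∈ 𝓡) (M X : C) (hX : X ∈ 𝓧)
    (f : M⟦(-1:ℤ)⟧ ⟶ R₀) (g : R₀ ⟶ X) (h : X ⟶ M⟦(-1:ℤ)⟧⟦(1:ℤ)⟧)
    (htri : Triangle.mk f g h ∈ distTriang C)
    (happrox : IsLeftApprox 𝓧 g) :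
    M ∈ 𝓧 := by
  obtain ⟨htwo, hrig, hmax⟩ := h𝓧max
  -- the triangle `R₀ → X → M → R₀⟦1⟧`
  obtain ⟨p, q, hG⟩ : ∃ (p : X ⟶ M) (q : M ⟶ R₀⟦(1:ℤ)⟧), Triangle.mk g p q ∈ distTriang C := by
    exact ⟨_, _, tri_iso₃ (tri_rot htri) (shiftNegShift M (1:ℤ))⟩
  -- the presentation of `X`
  obtain ⟨R₁, hR₁, B, ⟨R₂, hR₂, ⟨η⟩⟩, i, b, b', hB⟩ := htwo hX
  obtain ⟨a, c, hT⟩ : ∃ (a : R₂ ⟶ R₁) (c : X ⟶ R₂⟦(1:ℤ)⟧), Triangle.mk a i c ∈ distTriang C := by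
    obtain ⟨a, ha⟩ := (shiftFunctor C (1:ℤ)).map_surjective (-(η.inv ≫ b'))
    refine ⟨a, b ≫ η.hom, tri_unrot ?_⟩
    rw [ha, neg_neg]
    exact tri_iso₃ hB η
  obtain ⟨u, hu⟩ := tri_coyoneda₃ hT g (h𝓡 R₀ hR₀ R₂ hR₂ _)
  have hMtwo : M ∈ twoTerm 𝓡 := by
    obtain ⟨M', θ, j, d, hM'⟩ := exists_cone_triangle k a i c hT g p q hG u hu.symm
    have hsum : (R₂ ⊞ R₀) ∈ 𝓡 := h𝓡sub.2.1 hR₂ hR₀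
      ⟨biprod.inl, biprod.inr, biprod.fst, biprod.snd, by simp, by simp, by simp, by simp, by simp⟩
    exact ⟨R₁, hR₁, (R₂ ⊞ R₀)⟦(1:ℤ)⟧, ⟨_, hsum, ⟨Iso.refl _⟩⟩, _, _, _, tri_iso₂ (tri_rot hM') θ⟩
  have hqg : q ≫ g⟦(1:ℤ)⟧' = 0 := comp_distTriang_mor_zero₃₁ _ hG
  have h₂ : relOrthTo 𝓡 𝓧 M := by
    intro X' hX' φ hφ
    obtain ⟨y, rfl⟩ := tri_yoneda₃ hG φ (hrig X hX X' hX' _ (hφ.precomp p))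
    obtain ⟨y, rfl⟩ := (shiftFunctor C (1:ℤ)).map_surjective y
    obtain ⟨z, rfl⟩ := happrox X' hX' y
    rw [Functor.map_comp, reassoc_of% hqg, zero_comp]
  -- every map `R⟦1⟧ ⟶ M⟦1⟧` factors through `X⟦1⟧`
  have hfac : ∀ {Z : C} (φ : Z ⟶ M⟦(1:ℤ)⟧), InShiftIdeal 𝓡 φ →
      ∃ φ' : Z ⟶ X⟦(1:ℤ)⟧, InShiftIdeal 𝓡 φ' ∧ φ = φ' ≫ p⟦(1:ℤ)⟧' := by
    rintro Z φ ⟨R, hR, x, y, rfl⟩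
    obtain ⟨y, rfl⟩ := (shiftFunctor C (1:ℤ)).map_surjective y
    obtain ⟨z, rfl⟩ := tri_coyoneda₃ hG y (h𝓡 R hR R₀ hR₀ _)
    exact ⟨x ≫ z⟦(1:ℤ)⟧', ⟨R, hR, x, _, rfl⟩, by simp⟩
  refine hmax M hMtwo (isRelRigid_veeAdd 𝓡 𝓧 M hrig h₂ ?_ ?_)
  · intro X' hX' φ hφ
    obtain ⟨φ', hφ', rfl⟩ := hfac φ hφ
    rw [hrig X' hX' X hX φ' hφ', zero_comp]
  · intro φ hφ
    obtain ⟨φ', hφ', rfl⟩ := hfac φ hφ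
    rw [h₂ X hX φ' hφ', zero_comp]
end

section
/- Let C be an additive category and X ⊆ A two subcategories of C with X contravariantly finite in C. Then A is contravariantly finite in C if and only if A/X is contravariantly finite in the additive quotient C/X. -/
/-!
Setting: `C` is an additive category. Subcategories are identified with their classes of
objects and are always full, closed under isomorphisms, direct sums and direct summands.
-/

open CategoryTheory CategoryTheory.Limits

universe v u

variable {C : Type u} [Category.{v} C] [Preadditive C] [HasFiniteBiproducts C]

/-- The hom-relation identifying two morphisms whose difference factors through an object
of `𝓧`; the corresponding quotient category is the additive quotient `C/𝓧` of `C` by the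
ideal `[𝓧]`. -/
def factorRel (𝓧 : Set C) : HomRel C := fun {X Y} f g =>
  ∃ Z ∈ 𝓧, ∃ (a : X ⟶ Z) (b : Z ⟶ Y), f - g = a ≫ b

/-- The additive quotient `C/𝓧`. -/
abbrev QuotByX (𝓧 : Set C) := CategoryTheory.Quotient (factorRel 𝓧)

instance hasBinaryBiproducts_aux : HasBinaryBiproducts C :=
  hasBinaryBiproducts_of_finite_biproducts C

lemma biprod_isDirectSumOf (F G : C) : IsDirectSumOf (F ⊞ G) F G :=
  ⟨biprod.inl, biprod.inr, biprod.fst, biprod.snd, by simp, by simp, by simp, by simp,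
    biprod.total⟩

lemma factorRel_congruence (𝓧 : Set C) (h : IsSubcat 𝓧) (hcf : ContravariantlyFinite 𝓧) :
    Congruence (factorRel 𝓧) where
  equivalence := by
    intro X Y
    refine ⟨fun f => ?_, ?_, ?_⟩
    · obtain ⟨Z, hZ, -⟩ := hcf X
      exact ⟨Z, hZ, 0, 0, by simp⟩
    · rintro f g ⟨Z, hZ, a, b, e⟩
      exact ⟨Z, hZ, -a, b, by rw [Preadditive.neg_comp, ← e, neg_sub]⟩
    · rintro f g k ⟨Z, hZ, a, b, e⟩ ⟨Z', hZ', a', b', e'⟩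
      refine ⟨Z ⊞ Z', h.2.1 hZ hZ' (biprod_isDirectSumOf Z Z'), biprod.lift a a',
        biprod.desc b b', ?_⟩
      rw [biprod.lift_desc, ← e, ← e']
      abel
  comp_left := by
    rintro X Y W f g g' ⟨Z, hZ, a, b, e⟩
    exact ⟨Z, hZ, f ≫ a, b, by rw [← Preadditive.comp_sub, e, Category.assoc]⟩
  comp_right := by
    rintro X Y W f f' g ⟨Z, hZ, a, b, e⟩
    exact ⟨Z, hZ, a, b ≫ g, by rw [← Preadditive.sub_comp, e, Category.assoc]⟩

/-- **Lemma (Statement 6).** Let `𝓧 ⊆ 𝓐` be subcategories of an additive category `C`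
with `𝓧` contravariantly finite in `C`. Then `𝓐` is contravariantly finite in `C` if and
only if `𝓐/𝓧` is contravariantly finite in `C/𝓧`. -/
theorem contravariantlyFinite_iff_quotient
    (𝓧 𝓐 : Set C) (h𝓧sub : IsSubcat 𝓧) (h𝓐sub : IsSubcat 𝓐) (hXA : 𝓧 ⊆ 𝓐) (h𝓧cf : ContravariantlyFinite 𝓧) :
    ContravariantlyFinite 𝓐 ↔
      ContravariantlyFinite {q : QuotByX 𝓧 | q.as ∈ 𝓐} := by
  have := factorRel_congruence 𝓧 h𝓧sub h𝓧cf
  constructor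
  · rintro H ⟨c⟩
    obtain ⟨A, hA, f, hf⟩ := H c
    refine ⟨(Quotient.functor (factorRel 𝓧)).obj A, hA,
      (Quotient.functor (factorRel 𝓧)).map f, ?_⟩
    rintro ⟨A'⟩ hA' g
    obtain ⟨g, rfl⟩ := (Quotient.functor (factorRel 𝓧)).map_surjective
      (X := A') (Y := c) g
    obtain ⟨k, rfl⟩ := hf A' hA' g
    exact ⟨(Quotient.functor (factorRel 𝓧)).map k, ((Quotient.functor _).map_comp k f).symm⟩
  · intro H c
    obtain ⟨⟨A⟩, hA, f, hf⟩ := H ((Quotient.functor (factorRel 𝓧)).obj c)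
    obtain ⟨f, rfl⟩ := (Quotient.functor (factorRel 𝓧)).map_surjective
      (X := A) (Y := c) f
    obtain ⟨X, hX, x, hx⟩ := h𝓧cf c
    refine ⟨A ⊞ X, h𝓐sub.2.1 hA (hXA hX) (biprod_isDirectSumOf A X), biprod.desc f x, ?_⟩
    intro A' hA' g
    obtain ⟨k, hk⟩ := hf ((Quotient.functor (factorRel 𝓧)).obj A') hA'
      ((Quotient.functor (factorRel 𝓧)).map g)
    obtain ⟨k, rfl⟩ := (Quotient.functor (factorRel 𝓧)).map_surjective
      (X := A') (Y := A) k
    have hk' : (Quotient.functor (factorRel 𝓧)).map (k ≫ f) =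
        (Quotient.functor (factorRel 𝓧)).map g :=
      ((Quotient.functor _).map_comp k f).trans hk
    rw [Quotient.functor_map_eq_iff] at hk'
    obtain ⟨Z, hZ, a, b, e⟩ := hk'
    obtain ⟨l, rfl⟩ := hx Z hZ b
    refine ⟨biprod.lift k (-(a ≫ l)), ?_⟩
    rw [biprod.lift_desc, Preadditive.neg_comp, Category.assoc, ← e]
    abel
end
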